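/- Let M ⊆ W × F be the set of pairs (w,f) such that some stable matching μ of the matching problem satisfies μ(w) = f, and assume the matching problem has at least one stable matching. Then a pair (w,f) belongs to the normal form S* if and only if (w,f) ∈ M, or there exist pairs (w,f₁), (w,f₂), (w₁,f), (w₂,f) ∈ M with f₁ ≻_w f ≻_w f₂ and w₁ ≻_f w ≻_f w₂. -/

import Mathlib

/-- `(w,f)` blocks the matching `μ`: `f ≻_w μ(w)` and `w ≻_f μ⁻¹(f)`.
`prefW w f f'` means worker `w` strictly prefers firm `f` to firm `f'`;
`prefF f w w'` means firm `f` strictly prefers worker `w` to worker `w'`. -/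
def Blocks {W F : Type*} (prefW : W → F → F → Prop) (prefF : F → W → W → Prop)
    (μ : W ≃ F) (w : W) (f : F) : Prop :=
  prefW w f (μ w) ∧ prefF f w (μ.symm f)

/-- A matching is stable if no pair blocks it. -/
def IsStableMatching {W F : Type*} (prefW : W → F → F → Prop)
    (prefF : F → W → W → Prop) (μ : W ≃ F) : Prop :=
  ∀ w f, ¬ Blocks prefW prefF μ w f

/-- A pair `(w,f)` is unattractive in `S`. -/
def Unattractive {W F : Type*} (prefW : W → F → F → Prop) (prefF : F → W → W → Prop)
    (S : Set (W × F)) (w : W) (f : F) : Prop :=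
  (∃ f', (w, f') ∈ S ∧ prefW w f' f ∧
      ∀ w', w' ≠ w → (w', f') ∈ S → prefF f' w w') ∨
  (∃ w', (w', f) ∈ S ∧ prefF f w' w ∧
      ∀ f'', f'' ≠ f → (w', f'') ∈ S → prefW w' f f'')

/-- `delta S` is `S` with all pairs unattractive in `S` removed. -/
def delta {W F : Type*} (prefW : W → F → F → Prop) (prefF : F → W → W → Prop)
    (S : Set (W × F)) : Set (W × F) :=
  {p ∈ S | ¬ Unattractive prefW prefF S p.1 p.2}

/-- The normal form: the fixed point of `delta` reached by iterating from `W × F`.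
Since `delta S ⊆ S` and `W × F` is finite, `Fintype.card (W × F)` iterations suffice. -/
def NormalForm (W F : Type*) [Fintype W] [Fintype F]
    (prefW : W → F → F → Prop) (prefF : F → W → W → Prop) : Set (W × F) :=
  (delta prefW prefF)^[Fintype.card (W × F)] Set.univ

/-- `μ` is `S`-stable: `S`-admissible and no pair of `S` blocks it within `S`. -/
def SStable {W F : Type*} (prefW : W → F → F → Prop) (prefF : F → W → W → Prop)
    (S : Set (W × F)) (μ : W ≃ F) : Prop :=
  (∀ w, (w, μ w) ∈ S) ∧
  ∀ w f, (w, f) ∈ S → ¬ (prefW w f (μ w) ∧ prefF f w (μ.symm f))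

/-- Arcs of the matching digraph `D(S)`: from `(w,f)` to `(w,f')` whenever `f' ≻_w f`,
and from `(w,f)` to `(w',f)` whenever `w' ≻_f w`. -/
def Arc {W F : Type*} (prefW : W → F → F → Prop) (prefF : F → W → W → Prop)
    (S : Set (W × F)) (p q : W × F) : Prop :=
  p ∈ S ∧ q ∈ S ∧
    ((p.1 = q.1 ∧ prefW p.1 q.2 p.2) ∨ (p.2 = q.2 ∧ prefF p.2 q.1 p.1))

/-- `D(S)` contains a directed cycle: distinct vertices `c 0, …, c (n-1)` with `n ≥ 1`,
`c n = c 0`, and an arc from each vertex to the next. -/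
def HasDirectedCycle {W F : Type*} (prefW : W → F → F → Prop)
    (prefF : F → W → W → Prop) (S : Set (W × F)) : Prop :=
  ∃ (n : ℕ) (c : Fin (n + 1) → W × F), 0 < n ∧
    Function.Injective (fun i : Fin n => c i.castSucc) ∧
    c (Fin.last n) = c 0 ∧
    ∀ i : Fin n, Arc prefW prefF S (c i.castSucc) (c i.succ)

/-- The preference lists possess a cycle: there are `k ≥ 2`, distinct workers
`w_1, …, w_k` and distinct firms `f_1, …, f_k` (indexed by `ZMod k`) with
`f_{j+1} ≻_{w_j} f_j` and `w_j ≻_{f_j} w_{j-1}` for all `j`, indices modulo `k`. -/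
def PrefCycle {W F : Type*} (prefW : W → F → F → Prop)
    (prefF : F → W → W → Prop) : Prop :=
  ∃ k : ℕ, 2 ≤ k ∧ ∃ (ws : ZMod k → W) (fs : ZMod k → F),
    Function.Injective ws ∧ Function.Injective fs ∧
    ∀ j : ZMod k, prefW (ws j) (fs (j + 1)) (fs j) ∧ prefF (fs j) (ws j) (ws (j - 1))

/-!
If `w` is the top worker of some firm `f'` in `S`, then `w` can count on `f'` and rejects every firm
below it. Let `f'` be the best firm on which `w` can count in this way: the pair `(w, f')` survives
`delta`, so a pair that is unattractive in `S` is still unattractive in `delta S`. Hence the normal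
form consists of *exactly* the pairs that are not unattractive in it.

In such a set, `w` is the worst worker of her best firm. Matching all workers with their best firms
is therefore injective, and stable: a blocking pair cannot lie in the set, nor can it be
unattractive in it. The two optimal matchings obtained from the two sides surround every pair of
the set. Conversely, no pair of a stable matching is ever removed, and a pair that both sides prefer
to a stable partner is never unattractive, as that would yield a blocking pair.
-/

section FiniteTypes

lemma exists_mem_forall_rel_of_ne {α : Type*} [Finite α] (r : α → α → Prop)
    [IsStrictTotalOrder α r] {s : Set α} (hs : s.Nonempty) :
    ∃ a ∈ s, ∀ b, b ≠ a → b ∈ s → r a b := by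
  obtain ⟨a, ha, hmin⟩ := (Finite.wellFounded_of_trans_of_irrefl r).has_min s hs
  exact ⟨a, ha, fun b hne hb => (trichotomous_of r a b).resolve_right
    (not_or_intro hne.symm (hmin b hb))⟩

lemma isFixedPt_iterate_card {α : Type*} [Fintype α] {g : Set α → Set α} (hg : ∀ s, g s ⊆ s)
    (s : Set α) : Function.IsFixedPt g (g^[Fintype.card α] s) := by
  have hsub (k : ℕ) : g^[k + 1] s ⊆ g^[k] s := by
    rw [Function.iterate_succ_apply']
    exact hg _
  have eq_of_ncard_eq (k : ℕ) (h : (g^[k] s)ᶜ.ncard = (g^[k + 1] s)ᶜ.ncard) :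
      g^[k + 1] s = g^[k] s :=
    compl_injective
      (Set.eq_of_subset_of_ncard_le (Set.compl_subset_compl.2 (hsub k)) h.ge).symm
  have hmono : Monotone fun k => (g^[k] s)ᶜ.ncard :=
    monotone_nat_of_le_succ fun k => Set.ncard_le_ncard (Set.compl_subset_compl.2 (hsub k))
  have hbound (k : ℕ) : (g^[k] s)ᶜ.ncard ≤ Fintype.card α := by
    rw [← Nat.card_eq_fintype_card]
    exact Set.ncard_le_card _
  have hstab (k : ℕ) (h : (g^[k] s)ᶜ.ncard = (g^[k + 1] s)ᶜ.ncard) :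
      (g^[k + 1] s)ᶜ.ncard = (g^[k + 2] s)ᶜ.ncard := by
    rw [Function.iterate_succ_apply' g (k + 1), eq_of_ncard_eq k h,
      ← Function.iterate_succ_apply' g k, eq_of_ncard_eq k h]
  have hcard := Nat.stabilises_of_monotone hmono hbound hstab (Nat.le_succ _)
  exact (Function.iterate_succ_apply' g _ s).symm.trans (eq_of_ncard_eq _ hcard.symm)

end FiniteTypes

section StableMatching

variable {W F : Type*} {prefW : W → F → F → Prop} {prefF : F → W → W → Prop}
  {S : Set (W × F)}

/-- `f` is the best partner of `w` in `S`. Firms and their best workers are covered by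
`IsBest prefF (Prod.swap ⁻¹' S)`. -/
def IsBest (prefW : W → F → F → Prop) (S : Set (W × F)) (w : W) (f : F) : Prop :=
  (w, f) ∈ S ∧ ∀ f', f' ≠ f → (w, f') ∈ S → prefW w f f'

/-- `w` rejects `f` in `S`: she prefers to `f` some firm whose best worker in `S` she is. This is
the first clause of `Unattractive`; the second is its mirror image, in which `f` rejects `w`. -/
def Rejects (prefW : W → F → F → Prop) (prefF : F → W → W → Prop) (S : Set (W × F))
    (w : W) (f : F) : Prop :=
  ∃ f', prefW w f' f ∧ IsBest prefF (Prod.swap ⁻¹' S) f' w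

/-- `S` is normal if it consists of exactly the pairs that are not unattractive in `S`. Unlike being
a fixed point of `delta`, this also says that each pair outside `S` is unattractive in `S`. -/
def IsNormal (prefW : W → F → F → Prop) (prefF : F → W → W → Prop) (S : Set (W × F)) : Prop :=
  ∀ w f, (w, f) ∈ S ↔ ¬ Unattractive prefW prefF S w f

/-- `μ` is the worker-optimal matching in `S`: every worker gets her best partner in `S`. -/
def IsOptimal (prefW : W → F → F → Prop) (S : Set (W × F)) (μ : W ≃ F) : Prop :=
  ∀ w, IsBest prefW S w (μ w)

lemma IsBest.not_pref [∀ w, IsStrictTotalOrder F (prefW w)] {w : W} {f f' : F}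
    (hf : IsBest prefW S w f) (hf' : (w, f') ∈ S) : ¬ prefW w f' f := by
  intro hpref
  have hne : f' ≠ f := by
    rintro rfl
    exact irrefl_of (prefW w) _ hpref
  exact asymm_of (prefW w) hpref (hf.2 f' hne hf')

lemma IsBest.unique [∀ w, IsStrictTotalOrder F (prefW w)] {w : W} {f f' : F}
    (hf : IsBest prefW S w f) (hf' : IsBest prefW S w f') : f = f' :=
  Std.Trichotomous.trichotomous (r := prefW w) f f' (hf'.not_pref hf.1) (hf.not_pref hf'.1)

lemma unattractive_iff_rejects {w : W} {f : F} :
    Unattractive prefW prefF S w f ↔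
      Rejects prefW prefF S w f ∨ Rejects prefF prefW (Prod.swap ⁻¹' S) f w :=
  or_congr (exists_congr fun _ => and_left_comm) (exists_congr fun _ => and_left_comm)

lemma unattractive_swap {w : W} {f : F} :
    Unattractive prefF prefW (Prod.swap ⁻¹' S) f w ↔ Unattractive prefW prefF S w f :=
  or_comm

lemma delta_swap : delta prefF prefW (Prod.swap ⁻¹' S) = Prod.swap ⁻¹' delta prefW prefF S :=
  Set.ext fun _ => and_congr_right fun _ => not_congr unattractive_swap

lemma delta_subset : delta prefW prefF S ⊆ S := fun _ h => h.1

lemma IsNormal.swap (hS : IsNormal prefW prefF S) : IsNormal prefF prefW (Prod.swap ⁻¹' S) :=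
  fun f w => (hS w f).trans (not_congr unattractive_swap.symm)

lemma IsStableMatching.symm {μ : W ≃ F} (hμ : IsStableMatching prefW prefF μ) :
    IsStableMatching prefF prefW μ.symm :=
  fun f w h => hμ w f h.symm

lemma Rejects.delta [Finite F] [∀ w, IsStrictTotalOrder F (prefW w)]
    [∀ f, IsStrictTotalOrder W (prefF f)] {w : W} {f : F} (h : Rejects prefW prefF S w f) :
    Rejects prefW prefF (delta prefW prefF S) w f := by
  obtain ⟨f', ⟨hpref, hbest⟩, hmax⟩ := exists_mem_forall_rel_of_ne (prefW w) h
  refine ⟨f', hpref, ⟨hbest.1, ?_⟩, fun w' hne hw' => hbest.2 w' hne hw'.1⟩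
  rw [unattractive_iff_rejects]
  rintro (⟨f'', hpref', hbest'⟩ | ⟨w', hpref', hbest'⟩)
  · have hne : f'' ≠ f' := by
      rintro rfl
      exact irrefl_of (prefW w) _ hpref'
    exact asymm_of (prefW w) hpref' (hmax f'' hne ⟨trans_of (prefW w) hpref' hpref, hbest'⟩)
  · exact hbest.not_pref hbest'.1 hpref'

lemma Unattractive.delta [Finite W] [Finite F] [∀ w, IsStrictTotalOrder F (prefW w)]
    [∀ f, IsStrictTotalOrder W (prefF f)] {w : W} {f : F} (h : Unattractive prefW prefF S w f) :
    Unattractive prefW prefF (delta prefW prefF S) w f := by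
  rw [unattractive_iff_rejects] at h ⊢
  rw [← delta_swap]
  exact h.imp Rejects.delta Rejects.delta

lemma delta_normalForm [Fintype W] [Fintype F] :
    delta prefW prefF (NormalForm W F prefW prefF) = NormalForm W F prefW prefF :=
  isFixedPt_iterate_card (fun _ => delta_subset) Set.univ

lemma normalForm_induction [Fintype W] [Fintype F] {p : Set (W × F) → Prop}
    (huniv : p Set.univ) (hdelta : ∀ S, p S → p (delta prefW prefF S)) :
    p (NormalForm W F prefW prefF) :=
  Function.Iterate.rec p huniv hdelta _

lemma isNormal_normalForm [Fintype W] [Fintype F] [∀ w, IsStrictTotalOrder F (prefW w)]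
    [∀ f, IsStrictTotalOrder W (prefF f)] :
    IsNormal prefW prefF (NormalForm W F prefW prefF) := by
  have hremoved : ∀ w f, (w, f) ∉ NormalForm W F prefW prefF →
      Unattractive prefW prefF (NormalForm W F prefW prefF) w f := by
    refine normalForm_induction
      (p := fun S => ∀ w f, (w, f) ∉ S → Unattractive prefW prefF S w f)
      (fun _ _ h => absurd (Set.mem_univ _) h) fun S ih w f hnot => Unattractive.delta ?_
    by_contra hattractive
    exact hnot ⟨not_imp_comm.1 (ih w f) hattractive, hattractive⟩
  refine fun w f => ⟨fun hmem => ?_, not_imp_comm.1 (hremoved w f)⟩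
  rw [← delta_normalForm] at hmem
  exact hmem.2

section StablePairs

lemma IsStableMatching.not_rejects [∀ w, IsStrictTotalOrder F (prefW w)] {μ : W ≃ F}
    (hμ : IsStableMatching prefW prefF μ) (hμS : ∀ w, (w, μ w) ∈ S) {w : W} {f : F}
    (hf : f = μ w ∨ prefW w f (μ w)) : ¬ Rejects prefW prefF S w f := by
  rintro ⟨f', hpref, hbest⟩
  have hlt : prefW w f' (μ w) := by
    rcases hf with rfl | hf
    · exact hpref
    · exact trans_of (prefW w) hpref hf
  have hne : μ.symm f' ≠ w := by
    rintro rfl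
    rw [μ.apply_symm_apply] at hlt
    exact irrefl_of (prefW _) _ hlt
  exact hμ w f' ⟨hlt, hbest.2 _ hne (by simpa using hμS (μ.symm f'))⟩

lemma IsStableMatching.not_unattractive [∀ w, IsStrictTotalOrder F (prefW w)]
    [∀ f, IsStrictTotalOrder W (prefF f)] {μ ν : W ≃ F}
    (hμ : IsStableMatching prefW prefF μ) (hν : IsStableMatching prefW prefF ν)
    (hμS : ∀ w, (w, μ w) ∈ S) (hνS : ∀ w, (w, ν w) ∈ S) {w : W} {f : F}
    (hf : f = μ w ∨ prefW w f (μ w)) (hw : w = ν.symm f ∨ prefF f w (ν.symm f)) :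
    ¬ Unattractive prefW prefF S w f := by
  have hνS' (f : F) : (f, ν.symm f) ∈ Prod.swap ⁻¹' S := by simpa using hνS (ν.symm f)
  exact unattractive_iff_rejects.not.2
    (not_or_intro (hμ.not_rejects hμS hf) (hν.symm.not_rejects hνS' hw))

lemma IsStableMatching.mem_normalForm [Fintype W] [Fintype F]
    [∀ w, IsStrictTotalOrder F (prefW w)] [∀ f, IsStrictTotalOrder W (prefF f)] {μ : W ≃ F}
    (hμ : IsStableMatching prefW prefF μ) (w : W) : (w, μ w) ∈ NormalForm W F prefW prefF := by
  refine normalForm_induction (p := fun S => ∀ w, (w, μ w) ∈ S) (fun _ => Set.mem_univ _)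
    (fun S hμS w => ⟨hμS w, ?_⟩) w
  exact hμ.not_unattractive hμ hμS hμS (Or.inl rfl) (Or.inl (μ.symm_apply_apply w).symm)

end StablePairs

section OptimalMatchings

lemma IsNormal.pref_of_isBest [∀ f, IsStrictTotalOrder W (prefF f)]
    (hS : IsNormal prefW prefF S) {w w' : W} {f : F} (hbest : IsBest prefW S w f)
    (hmem : (w', f) ∈ S) (hne : w' ≠ w) : prefF f w' w := by
  rcases trichotomous_of (prefF f) w' w with hpref | heq | hpref
  · exact hpref
  · exact absurd heq hne
  · have hreject : Rejects prefF prefW (Prod.swap ⁻¹' S) f w' := ⟨w, hpref, hbest⟩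
    exact absurd (unattractive_iff_rejects.2 (Or.inr hreject)) ((hS w' f).1 hmem)

lemma IsNormal.exists_isOptimal [Fintype W] [Fintype F] [∀ w, IsStrictTotalOrder F (prefW w)]
    [∀ f, IsStrictTotalOrder W (prefF f)] (hS : IsNormal prefW prefF S)
    (hcard : Fintype.card W = Fintype.card F) (hne : ∀ w, ∃ f, (w, f) ∈ S) :
    ∃ μ : W ≃ F, IsOptimal prefW S μ := by
  choose best hbest using fun w => exists_mem_forall_rel_of_ne (prefW w) (hne w)
  have hinj : Function.Injective best := by
    intro w w' heq
    by_contra hww'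
    have hbest' : IsBest prefW S w' (best w) := heq ▸ hbest w'
    exact asymm_of (prefF (best w)) (hS.pref_of_isBest hbest' (hbest w).1 hww')
      (hS.pref_of_isBest (hbest w) hbest'.1 (Ne.symm hww'))
  exact ⟨Equiv.ofBijective best ((Fintype.bijective_iff_injective_and_card best).2 ⟨hinj, hcard⟩),
    hbest⟩

lemma IsOptimal.pref_symm [∀ f, IsStrictTotalOrder W (prefF f)] {μ : W ≃ F}
    (hμ : IsOptimal prefW S μ) (hS : IsNormal prefW prefF S) {w : W} {f : F}
    (hmem : (w, f) ∈ S) (hne : f ≠ μ w) : prefF f w (μ.symm f) := by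
  have hbest : IsBest prefW S (μ.symm f) f := by simpa using hμ (μ.symm f)
  exact hS.pref_of_isBest hbest hmem fun h => hne (μ.symm_apply_eq.1 h.symm)

lemma IsOptimal.isStableMatching [∀ w, IsStrictTotalOrder F (prefW w)]
    [∀ f, IsStrictTotalOrder W (prefF f)] {μ : W ≃ F} (hμ : IsOptimal prefW S μ)
    (hS : IsNormal prefW prefF S) : IsStableMatching prefW prefF μ := by
  rintro w f ⟨hprefW, hprefF⟩
  have hunattractive : Unattractive prefW prefF S w f :=
    not_not.1 ((hS w f).not.1 fun hmem => (hμ w).not_pref hmem hprefW)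
  rcases unattractive_iff_rejects.1 hunattractive with ⟨f', hpref, hbest⟩ | ⟨w', hpref, hbest⟩
  · exact (hμ w).not_pref hbest.1 (trans_of (prefW w) hpref hprefW)
  · have hw' : μ.symm f = w' := μ.symm_apply_eq.2 (hbest.unique (hμ w'))
    exact asymm_of (prefF f) hpref (hw' ▸ hprefF)

end OptimalMatchings

end StableMatching

/-- A pair belongs to the normal form iff it is part of some stable matching or
is "surrounded" by pairs that are part of stable matchings. -/
theorem normalForm_mem_iff {W F : Type*} [Fintype W] [Fintype F] [Nonempty W]
    (hcard : Fintype.card W = Fintype.card F)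
    (prefW : W → F → F → Prop) (prefF : F → W → W → Prop)
    (hW : ∀ w, IsStrictTotalOrder F (prefW w))
    (hF : ∀ f, IsStrictTotalOrder W (prefF f))
    (hex : ∃ μ : W ≃ F, IsStableMatching prefW prefF μ)
    (M : Set (W × F))
    (hM : M = {p : W × F | ∃ μ : W ≃ F, IsStableMatching prefW prefF μ ∧ μ p.1 = p.2})
    (w : W) (f : F) :
    (w, f) ∈ NormalForm W F prefW prefF ↔
      (w, f) ∈ M ∨
      ∃ f₁ f₂ w₁ w₂, (w, f₁) ∈ M ∧ (w, f₂) ∈ M ∧ (w₁, f) ∈ M ∧ (w₂, f) ∈ M ∧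
        prefW w f₁ f ∧ prefW w f f₂ ∧ prefF f w₁ w ∧ prefF f w w₂ := by
  simp only [hM, Set.mem_ofPred_eq]
  have hS : IsNormal prefW prefF (NormalForm W F prefW prefF) := isNormal_normalForm
  constructor
  · intro hmem
    obtain ⟨μ₀, hμ₀⟩ := hex
    obtain ⟨μ, hμ⟩ := hS.exists_isOptimal hcard fun w => ⟨μ₀ w, hμ₀.mem_normalForm w⟩
    obtain ⟨ν, hν⟩ := hS.swap.exists_isOptimal hcard.symm fun f =>
      ⟨μ₀.symm f, by simpa using hμ₀.mem_normalForm (μ₀.symm f)⟩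
    have hμstable := hμ.isStableMatching hS
    have hνstable := (hν.isStableMatching hS.swap).symm
    by_cases hfμ : f = μ w
    · exact Or.inl ⟨μ, hμstable, hfμ.symm⟩
    by_cases hwν : w = ν f
    · exact Or.inl ⟨ν.symm, hνstable, ν.symm_apply_eq.2 hwν⟩
    exact Or.inr ⟨μ w, ν.symm w, ν f, μ.symm f,
      ⟨μ, hμstable, rfl⟩, ⟨ν.symm, hνstable, rfl⟩,
      ⟨ν.symm, hνstable, ν.symm_apply_apply f⟩, ⟨μ, hμstable, μ.apply_symm_apply f⟩,
      (hμ w).2 f hfμ hmem, hν.pref_symm hS.swap hmem hwν,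
      (hν f).2 w hwν hmem, hμ.pref_symm hS hmem hfμ⟩
  · rintro (⟨μ, hμ, rfl⟩ |
      ⟨-, -, -, w₂, -, ⟨μ, hμ, rfl⟩, -, ⟨ν, hν, rfl⟩, -, hf, -, hw⟩)
    · exact hμ.mem_normalForm w
    · exact (hS w _).2 (hμ.not_unattractive hν hμ.mem_normalForm hν.mem_normalForm
        (Or.inr hf) (Or.inr (by simpa using hw)))
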